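/- Let T > 0. The function u(t,q,p) = (2/3)(q² + p² + qp − 2) e^{−(T−t)} + (1/3)(q² − 2p² − 2qp + 1) e^{−(T−t)} cos(√3 (T−t)) + (1/√3)(2qp + q² − 1) e^{−(T−t)} sin(√3 (T−t)) satisfies ∂u/∂t + p ∂u/∂q − q ∂u/∂p − p ∂u/∂p + ∂²u/∂p² = 0 for all (t,q,p) ∈ (0,T) × (0,∞) × ℝ, the terminal condition u(T,q,p) = q² − 1 for all q > 0 and p ∈ ℝ, and the specular boundary condition u(t,0,p) = u(t,0,−p) for all t ∈ (0,T) and p ∈ ℝ. -/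

import Mathlib

/-!
The generator `L = p ∂_q - (q + p) ∂_p + ∂_p²` maps polynomials of degree at most two in `(q, p)` to
such polynomials. Besides an eigenfunction of eigenvalue `-1`, it has there an invariant plane on
which it acts with the conjugate eigenvalues `-1 ± i √3`. Hence `e^{(T-t)L} (q² - 1)` is a
combination of three fixed polynomials with coefficients `e^{-(T-t)}`, `e^{-(T-t)} cos (√3 (T-t))`
and `e^{-(T-t)} sin (√3 (T-t))`. Only the monomials `q²`, `qp`, `p²`, `1` occur, so the solution is
invariant under `(q, p) ↦ (-q, -p)`; on the line `q = 0` this is the specular condition.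
-/

open Matrix

section Generator

/-- The generator `p ∂_q + b ∂_p + (σ² / 2) ∂_p²` of the Langevin dynamics `dQ = P dt`,
`dP = b(Q, P) dt + σ dW`, through which the backward Kolmogorov equation reads
`∂_t u + L u = 0`. It is built from `deriv`, so it is meaningful only for observables that are
differentiable in position and twice differentiable in momentum. -/
noncomputable def langevinGenerator (b : ℝ → ℝ → ℝ) (σ : ℝ) (f : ℝ → ℝ → ℝ) (q p : ℝ) : ℝ :=
  p * deriv (fun y => f y p) q + b q p * deriv (f q) p + σ ^ 2 / 2 * deriv (deriv (f q)) p

variable {ι : Type*} [Fintype ι] {b : ℝ → ℝ → ℝ} {σ t q p : ℝ} {f : ι → ℝ → ℝ → ℝ}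

theorem deriv_const_dotProduct {g : ι → ℝ → ℝ} {x : ℝ} (a : ι → ℝ)
    (hg : ∀ i, DifferentiableAt ℝ (g i) x) :
    deriv (fun y => a ⬝ᵥ fun i => g i y) x = a ⬝ᵥ fun i => deriv (g i) x :=
  (HasDerivAt.fun_sum fun i _ => (hg i).hasDerivAt.const_mul (a i)).deriv

theorem langevinGenerator_dotProduct (a : ι → ℝ)
    (hq : ∀ i, DifferentiableAt ℝ (fun y => f i y p) q) (hp : ∀ i, ContDiff ℝ 2 (f i q)) :
    langevinGenerator b σ (fun y z => a ⬝ᵥ fun i => f i y z) q p =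
      a ⬝ᵥ fun i => langevinGenerator b σ (f i) q p := by
  have hp₁ (i : ι) : Differentiable ℝ (f i q) := (hp i).differentiable two_ne_zero
  have hp₂ (i : ι) : Differentiable ℝ (deriv (f i q)) := (hp i).differentiable_deriv_two
  have hderiv : deriv (fun z => a ⬝ᵥ fun i => f i q z) = fun z => a ⬝ᵥ fun i => deriv (f i q) z :=
    funext fun z => deriv_const_dotProduct a fun i => hp₁ i z
  simp only [langevinGenerator, hderiv, deriv_const_dotProduct a hq,
    deriv_const_dotProduct a fun i => hp₂ i p]
  simp only [dotProduct, Finset.mul_sum, ← Finset.sum_add_distrib]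
  exact Finset.sum_congr rfl fun i _ => by ring

theorem deriv_add_langevinGenerator_dotProduct_eq_zero {M : Matrix ι ι ℝ} {c : ℝ → ι → ℝ}
    (hq : ∀ i, DifferentiableAt ℝ (fun y => f i y p) q) (hp : ∀ i, ContDiff ℝ 2 (f i q))
    (hM : ∀ i, langevinGenerator b σ (f i) q p = (M *ᵥ fun j => f j q p) i)
    (hc : HasDerivAt c (-(c t ᵥ* M)) t) :
    deriv (fun s => c s ⬝ᵥ fun i => f i q p) t +
      langevinGenerator b σ (fun y z => c t ⬝ᵥ fun i => f i y z) q p = 0 := by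
  have htime : HasDerivAt (fun s => c s ⬝ᵥ fun i => f i q p)
      (-(c t ᵥ* M) ⬝ᵥ fun i => f i q p) t :=
    HasDerivAt.fun_sum fun i _ => (hasDerivAt_pi.1 hc i).mul_const (f i q p)
  rw [htime.deriv, langevinGenerator_dotProduct _ hq hp, funext hM, dotProduct_mulVec,
    neg_dotProduct, neg_add_cancel]

end Generator

section Quadratic

/-- The phase-space observable `α q² + β q p + γ p² + δ`: a quadratic polynomial without linear
part, written through its coefficients so that a linear Langevin generator acts on the latter. -/
def evenQuadratic (α β γ δ q p : ℝ) : ℝ := α * q ^ 2 + β * q * p + γ * p ^ 2 + δ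

variable (α β γ δ q p : ℝ)

theorem hasDerivAt_evenQuadratic_left :
    HasDerivAt (fun y => evenQuadratic α β γ δ y p) (2 * α * q + β * p) q :=
  (((((hasDerivAt_pow 2 q).const_mul α).fun_add
    (((hasDerivAt_id' q).const_mul β).mul_const p)).add_const (γ * p ^ 2)).add_const δ).congr_deriv
    (by push_cast; ring)

theorem hasDerivAt_evenQuadratic_right :
    HasDerivAt (evenQuadratic α β γ δ q) (β * q + 2 * γ * p) p :=
  (((((hasDerivAt_id' p).const_mul (β * q)).const_add (α * q ^ 2)).fun_add
    ((hasDerivAt_pow 2 p).const_mul γ)).add_const δ).congr_deriv (by push_cast; ring)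

theorem contDiff_evenQuadratic_right {n : WithTop ℕ∞} :
    ContDiff ℝ n (evenQuadratic α β γ δ q) := by
  unfold evenQuadratic
  fun_prop

theorem langevinGenerator_evenQuadratic (k η σ : ℝ) :
    langevinGenerator (fun q p => -k * q - η * p) σ (evenQuadratic α β γ δ) q p =
      evenQuadratic (-k * β) (2 * α - η * β - 2 * k * γ) (β - 2 * η * γ) (σ ^ 2 * γ) q p := by
  have hp : deriv (evenQuadratic α β γ δ q) = fun z => β * q + 2 * γ * z :=
    funext fun z => (hasDerivAt_evenQuadratic_right α β γ δ q z).deriv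
  have hpp : HasDerivAt (fun z => β * q + 2 * γ * z) (2 * γ) p := by
    simpa only [mul_one] using ((hasDerivAt_id' p).const_mul (2 * γ)).const_add (β * q)
  rw [langevinGenerator, (hasDerivAt_evenQuadratic_left α β γ δ q p).deriv, hp, hpp.deriv]
  unfold evenQuadratic
  ring

end Quadratic

section Modes

/-- The three modes of `p ∂_q - (q + p) ∂_p + ∂_p²` of which `q² - 1` is made: an eigenfunction of
eigenvalue `-1`, then the real part and minus the imaginary part of an eigenfunction of eigenvalue
`-1 + i √3`. -/
noncomputable def langevinMode : Fin 3 → ℝ → ℝ → ℝ :=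
  ![evenQuadratic (2 / 3) (2 / 3) (2 / 3) (-4 / 3),
    evenQuadratic (1 / 3) (-2 / 3) (-2 / 3) (1 / 3),
    evenQuadratic (√3 / 3) (2 * √3 / 3) 0 (-√3 / 3)]

/-- The real normal form of an operator with eigenvalues `μ` and `μ ± i ω`, by which the generator
acts on the modes; row `i` holds the expansion of the image of the `i`-th mode. -/
def spiralMatrix (μ ω : ℝ) : Matrix (Fin 3) (Fin 3) ℝ :=
  !![μ, 0, 0; 0, μ, ω; 0, -ω, μ]

/-- The row vector `(1, 1, 0) e^{τ A}` for `A = spiralMatrix μ ω`: the coefficients of the solution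
in the modes at time `τ` before the terminal one. -/
noncomputable def spiralCoeff (μ ω τ : ℝ) : Fin 3 → ℝ :=
  Real.exp (μ * τ) • ![1, Real.cos (ω * τ), Real.sin (ω * τ)]

theorem vecMul_spiralMatrix (μ ω : ℝ) (v : Fin 3 → ℝ) :
    v ᵥ* spiralMatrix μ ω = ![v 0 * μ, v 1 * μ - v 2 * ω, v 1 * ω + v 2 * μ] := by
  ext i
  fin_cases i <;> simp [spiralMatrix, vecMul, dotProduct, Fin.sum_univ_three, sub_eq_add_neg]

theorem spiralMatrix_mulVec (μ ω : ℝ) (v : Fin 3 → ℝ) :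
    spiralMatrix μ ω *ᵥ v = ![μ * v 0, μ * v 1 + ω * v 2, μ * v 2 - ω * v 1] := by
  ext i
  fin_cases i <;>
    simp [spiralMatrix, mulVec, dotProduct, Fin.sum_univ_three, sub_eq_neg_add]

theorem hasDerivAt_spiralCoeff (μ ω τ : ℝ) :
    HasDerivAt (spiralCoeff μ ω) (spiralCoeff μ ω τ ᵥ* spiralMatrix μ ω) τ := by
  have hexp : HasDerivAt (fun s => Real.exp (μ * s)) (Real.exp (μ * τ) * μ) τ := by
    simpa only [mul_one] using ((hasDerivAt_id' τ).const_mul μ).exp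
  have hangle : HasDerivAt (fun s => ω * s) ω τ := by
    simpa only [mul_one] using (hasDerivAt_id' τ).const_mul ω
  have htrig : HasDerivAt (fun s => ![1, Real.cos (ω * s), Real.sin (ω * s)])
      ![0, -Real.sin (ω * τ) * ω, Real.cos (ω * τ) * ω] τ := by
    rw [hasDerivAt_pi, Fin.forall_fin_succ, Fin.forall_fin_two]
    exact ⟨hasDerivAt_const τ 1, hangle.cos, hangle.sin⟩
  refine (hexp.fun_smul htrig).congr_deriv ?_
  rw [vecMul_spiralMatrix, spiralCoeff]
  ext i
  match i with
  | 0 | 1 | 2 =>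
    simp only [Pi.add_apply, Pi.smul_apply, smul_eq_mul, cons_val]
    ring

theorem differentiable_langevinMode_left (i : Fin 3) (p : ℝ) :
    Differentiable ℝ fun y => langevinMode i y p := by
  fin_cases i <;> exact fun q => (hasDerivAt_evenQuadratic_left ..).differentiableAt

theorem contDiff_langevinMode_right {n : WithTop ℕ∞} (i : Fin 3) (q : ℝ) :
    ContDiff ℝ n (langevinMode i q) := by
  fin_cases i <;> exact contDiff_evenQuadratic_right ..

theorem langevinGenerator_langevinMode (i : Fin 3) (q p : ℝ) :
    langevinGenerator (fun q p => -q - p) √2 (langevinMode i) q p =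
      (spiralMatrix (-1) √3 *ᵥ fun j => langevinMode j q p) i := by
  have hgen (α β γ δ : ℝ) :
      langevinGenerator (fun q p => -q - p) √2 (evenQuadratic α β γ δ) q p =
        evenQuadratic (-β) (2 * α - β - 2 * γ) (β - 2 * γ) (2 * γ) q p := by
    simpa only [neg_mul, one_mul, mul_one, Real.sq_sqrt zero_le_two] using
      langevinGenerator_evenQuadratic α β γ δ q p 1 1 √2
  have hsqrt : √3 ^ 2 = 3 := Real.sq_sqrt zero_le_three
  rw [spiralMatrix_mulVec]
  match i with
  | 0 =>
    simp only [langevinMode, cons_val, hgen, evenQuadratic]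
    ring
  | 1 =>
    simp only [langevinMode, cons_val, hgen, evenQuadratic]
    linear_combination (-(2 * q * p + q ^ 2 - 1) / 3) * hsqrt
  | 2 =>
    simp only [langevinMode, cons_val, hgen, evenQuadratic]
    ring

end Modes

theorem stmt3_general (T : ℝ)
    (u : ℝ → ℝ → ℝ → ℝ)
    (hu : ∀ t q p, u t q p =
      (2 / 3) * (q ^ 2 + p ^ 2 + q * p - 2) * Real.exp (-(T - t))
      + (1 / 3) * (q ^ 2 - 2 * p ^ 2 - 2 * q * p + 1) * Real.exp (-(T - t))
          * Real.cos (Real.sqrt 3 * (T - t))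
      + (1 / Real.sqrt 3) * (2 * q * p + q ^ 2 - 1) * Real.exp (-(T - t))
          * Real.sin (Real.sqrt 3 * (T - t))) :
    (∀ t q p : ℝ,
      deriv (fun s => u s q p) t
        + p * deriv (fun y => u t y p) q
        - q * deriv (u t q) p
        - p * deriv (u t q) p
        + deriv (deriv (u t q)) p = 0)
    ∧ (∀ q p : ℝ, u T q p = q ^ 2 - 1)
    ∧ (∀ t q p : ℝ, u t (-q) (-p) = u t q p) := by
  have hinv : 1 / √3 = √3 / 3 := Real.sqrt_div_self'.symm
  have hmodes : u = fun t q p => spiralCoeff (-1) √3 (T - t) ⬝ᵥ fun i => langevinMode i q p := by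
    funext t q p
    simp only [hu, hinv, spiralCoeff, langevinMode, evenQuadratic, dotProduct,
      Pi.smul_apply, smul_eq_mul, Fin.sum_univ_three, cons_val, neg_one_mul]
    ring
  refine ⟨fun t q p => ?_, fun q p => ?_, fun t q p => ?_⟩
  · have hpde : deriv (fun s => u s q p) t +
        langevinGenerator (fun q p => -q - p) √2 (u t) q p = 0 := by
      rw [hmodes]
      exact deriv_add_langevinGenerator_dotProduct_eq_zero
        (fun i => differentiable_langevinMode_left i p q)
        (fun i => contDiff_langevinMode_right i q)
        (fun i => langevinGenerator_langevinMode i q p)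
        ((hasDerivAt_spiralCoeff (-1) √3 (T - t)).comp_const_sub T t)
    rw [langevinGenerator, Real.sq_sqrt zero_le_two] at hpde
    linear_combination hpde
  · simp only [hu, sub_self, neg_zero, mul_zero, Real.exp_zero, Real.cos_zero, Real.sin_zero]
    ring
  · simp only [hu]
    ring

/-- Explicit solution of the one-dimensional backward Kolmogorov equation
`∂u/∂t + p ∂u/∂q − q ∂u/∂p − p ∂u/∂p + ∂²u/∂p² = 0` on `(0,T) × (0,∞) × ℝ`
with terminal condition `u(T,q,p) = q² − 1` and specular boundary condition
`u(t,0,p) = u(t,0,−p)`. -/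
theorem stmt3 (T : ℝ) (hT : 0 < T)
    (u : ℝ → ℝ → ℝ → ℝ)
    (hu : ∀ t q p, u t q p =
      (2 / 3) * (q ^ 2 + p ^ 2 + q * p - 2) * Real.exp (-(T - t))
      + (1 / 3) * (q ^ 2 - 2 * p ^ 2 - 2 * q * p + 1) * Real.exp (-(T - t))
          * Real.cos (Real.sqrt 3 * (T - t))
      + (1 / Real.sqrt 3) * (2 * q * p + q ^ 2 - 1) * Real.exp (-(T - t))
          * Real.sin (Real.sqrt 3 * (T - t))) :
    (∀ t ∈ Set.Ioo (0 : ℝ) T, ∀ q ∈ Set.Ioi (0 : ℝ), ∀ p : ℝ,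
      deriv (fun s => u s q p) t
        + p * deriv (fun y => u t y p) q
        - q * deriv (u t q) p
        - p * deriv (u t q) p
        + deriv (deriv (u t q)) p = 0)
    ∧ (∀ q ∈ Set.Ioi (0 : ℝ), ∀ p : ℝ, u T q p = q ^ 2 - 1)
    ∧ (∀ t ∈ Set.Ioo (0 : ℝ) T, ∀ p : ℝ, u t 0 p = u t 0 (-p)) := by
  obtain ⟨hpde, hterminal, hsymm⟩ := stmt3_general T u hu
  exact ⟨fun t _ q _ p => hpde t q p, fun q _ p => hterminal q p,
    fun t _ p => by simpa only [neg_zero, neg_neg] using hsymm t 0 (-p)⟩
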